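/- Fix an integer m ≥ 1 and a real l > 0. There exists a constant C > 0, independent of M and k, such that for every integer M with M ≥ max(2, m), every integer k ≥ 1, and every m-times continuously differentiable function f : ℝ → ℝ, the Legendre wavelet projection Ψ_{k,M−1}(f) satisfies ‖f − Ψ_{k,M−1}(f)‖_{L²(0,l)} ≤ C (M−1)^{−m} 2^{−km} ‖f^{(m)}‖_{L²(0,l)}. -/

import Mathlib

/-!
On each of the `2^(k-1)` dyadic pieces the wavelet projection of `f` is, after an affine change of
variables onto `[-1, 1]`, the Legendre partial sum of degree `< M` of the rescaled function
(`waveletProj_piece`). This partial sum is the best `L²` approximation by polynomials of degree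
`< M` (`legProj_best`), so it is enough to produce one good polynomial approximant.

The heart is a spectral gap for the Legendre operator `L p = ((1 - x²) p')'`: since `L` preserves
the degree filtration and acts on the leading coefficient in degree `n` by `-n (n + 1)`, every
polynomial `p` is within squared distance `(∫ (1 - x²) p'²) / (M (M + 1))` of the polynomials of
degree `< M` (`poly_gap`, by induction on the degree of `p`; only orthogonality of `P_n` to lower
degrees is needed). Weierstrass approximation of `f'` extends this to `C¹` functions with the bound
`(4 / M²) ∫ f'²`, up to `ε` (`jackson_one`). Applying that to `f - Q`, where `Q` is an antiderivative
of a good approximant of `f'`, and inducting on `m` gives the factor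
`4^m / (M (M - 1) ⋯ (M - m + 1))²` (`jackson`), and `m (M - m + 1) ≥ M - 1` bounds it by
`(2 m)^(2 m) / (M - 1)^(2 m)`. Rescaling a piece of length `l / 2^(k-1)` contributes
`(l / 2^k)^(2 m)`, and the squared errors are summed over the pieces; `C = (2 m l)^m` works.
-/

open intervalIntegral

/-- The `m`-th Legendre polynomial, via Rodrigues' formula. -/
noncomputable def legendreP (m : ℕ) : ℝ → ℝ :=
  fun x => (1 / ((2 : ℝ) ^ m * (Nat.factorial m : ℝ))) *
    iteratedDeriv m (fun y : ℝ => (y ^ 2 - 1) ^ m) x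

/-- The Legendre wavelet `ψ_{n,m}` on `[0, l)` at resolution level `k`. -/
noncomputable def legWavelet (l : ℝ) (k n m : ℕ) : ℝ → ℝ :=
  fun x => if ((n : ℝ) - 1) * l / 2 ^ (k - 1) ≤ x ∧ x < (n : ℝ) * l / 2 ^ (k - 1) then
      (2 : ℝ) ^ ((k : ℝ) / 2) * Real.sqrt ((2 * (m : ℝ) + 1) / (2 * l)) *
        legendreP m (((2 : ℝ) ^ k / l) * x - 2 * (n : ℝ) + 1)
    else 0

/-- The Legendre wavelet coefficient `a_{n,m} = ∫_0^l f ψ_{n,m}`. -/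
noncomputable def waveletCoeff (l : ℝ) (k : ℕ) (f : ℝ → ℝ) (n m : ℕ) : ℝ :=
  ∫ x in (0 : ℝ)..l, f x * legWavelet l k n m x

/-- The Legendre wavelet projection `Ψ_{k,M-1}(f)`. -/
noncomputable def waveletProj (l : ℝ) (k M : ℕ) (f : ℝ → ℝ) : ℝ → ℝ :=
  fun x => ∑ n ∈ Finset.Icc 1 (2 ^ (k - 1)), ∑ m' ∈ Finset.range M,
    waveletCoeff l k f n m' * legWavelet l k n m' x

/-- The seminorm `|f|_{H^{r,m,M-1,k}(0,l)}`. -/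
noncomputable def semiNorm (l : ℝ) (r m M k : ℕ) (f : ℝ → ℝ) : ℝ :=
  Real.sqrt (∑ j ∈ Finset.Icc (min m M) m,
    ((2 : ℝ) ^ k) ^ (2 * (r : ℤ) - 2 * (j : ℤ)) *
      ∫ x in (0 : ℝ)..l, (iteratedDeriv j f x) ^ 2)

/-! ### Legendre polynomials and the spectral gap -/

open Polynomial in
/-- The linear functional `p ↦ ∫_{-1}^1 p`, so that `J (p * q)` is the `L²(-1,1)` inner product. -/
noncomputable def legJ : ℝ[X] →ₗ[ℝ] ℝ where
  toFun p := ∫ x in (-1 : ℝ)..1, p.eval x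
  map_add' p q := by
    simp only [Polynomial.eval_add]
    exact intervalIntegral.integral_add (p.continuous.intervalIntegrable _ _)
      (q.continuous.intervalIntegrable _ _)
  map_smul' c p := by
    simp [Polynomial.eval_smul]

open Polynomial in
/-- The `n`-th Legendre polynomial as an element of `ℝ[X]`. -/
noncomputable def legPoly (n : ℕ) : ℝ[X] :=
  C (1 / ((2 : ℝ) ^ n * (Nat.factorial n : ℝ))) * derivative^[n] ((X ^ 2 - 1) ^ n)

open Polynomial in
/-- The Sturm-Liouville operator `p ↦ ((1 - x²) p')'` of the Legendre equation. -/
noncomputable def legL (p : ℝ[X]) : ℝ[X] := derivative ((1 - X ^ 2) * derivative p)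

section
open Polynomial

lemma legJ_apply (p : ℝ[X]) : legJ p = ∫ x in (-1 : ℝ)..1, p.eval x := rfl

lemma legJ_derivative (p : ℝ[X]) : legJ (derivative p) = p.eval 1 - p.eval (-1) := by
  rw [legJ_apply]
  exact intervalIntegral.integral_eq_sub_of_hasDerivAt (fun x _ => p.hasDerivAt x)
    ((derivative p).continuous.intervalIntegrable _ _)

lemma legJ_sq_nonneg (p : ℝ[X]) : 0 ≤ legJ (p * p) := by
  rw [legJ_apply]
  apply intervalIntegral.integral_nonneg (by norm_num)
  intro x _
  rw [eval_mul]
  exact mul_self_nonneg _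

lemma mem_degLT {n : ℕ} {p : ℝ[X]} : p ∈ degreeLT ℝ n ↔ ∀ i, n ≤ i → p.coeff i = 0 := by
  rw [mem_degreeLT, degree_lt_iff_coeff_zero]

lemma degLT_mono {a b : ℕ} (h : a ≤ b) {p : ℝ[X]} (hp : p ∈ degreeLT ℝ a) : p ∈ degreeLT ℝ b :=
  degreeLT_mono h hp

lemma coeff_legPoly (n i : ℕ) : (legPoly n).coeff i = 1 / ((2 : ℝ) ^ n * (Nat.factorial n : ℝ)) *
    (((i + n).descFactorial n : ℝ) * ((X ^ 2 - 1 : ℝ[X]) ^ n).coeff (i + n)) := by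
  rw [legPoly, coeff_C_mul, coeff_iterate_derivative, nsmul_eq_mul]

lemma legPoly_mem (n : ℕ) : legPoly n ∈ degreeLT ℝ (n + 1) := by
  rw [mem_degLT]
  intro i hi
  rw [coeff_legPoly, coeff_eq_zero_of_natDegree_lt (p := (X ^ 2 - 1 : ℝ[X]) ^ n)]
  · simp
  · have h : (X ^ 2 - 1 : ℝ[X]).natDegree ≤ 2 := by compute_degree
    have := natDegree_pow_le_of_le n h
    omega

lemma legPoly_lead (n : ℕ) : (legPoly n).coeff n ≠ 0 := by
  have h : (X ^ 2 - 1 : ℝ[X]).natDegree ≤ 2 := by compute_degree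
  have h1 := coeff_pow_of_natDegree_le (m := n) h
  have h2 : (X ^ 2 - 1 : ℝ[X]).coeff 2 = 1 := by simp [coeff_one]
  rw [h2, one_pow, mul_two] at h1
  rw [coeff_legPoly, h1]
  have : 0 < (n + n).descFactorial n := Nat.descFactorial_pos.2 (by omega)
  positivity

lemma sub_lead_mem {n : ℕ} {p : ℝ[X]} (hp : p ∈ degreeLT ℝ (n + 1)) :
    ∃ c : ℝ, p - c • legPoly n ∈ degreeLT ℝ n := by
  refine ⟨p.coeff n / (legPoly n).coeff n, ?_⟩
  rw [mem_degLT] at hp ⊢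
  intro i hi
  rcases hi.eq_or_lt with rfl | hi
  · simp [legPoly_lead]
  · simp [hp i hi, mem_degLT.1 (legPoly_mem n) i hi]

/-- If `(x² - 1)^n` divides `u`, then the `n`-th derivative of `u` is orthogonal to all polynomials of
degree less than `n`: integrate by parts, the boundary terms vanish. -/
lemma legJ_orth_aux (n : ℕ) : ∀ u q : ℝ[X], (X ^ 2 - 1) ^ n ∣ u → q ∈ degreeLT ℝ n →
    legJ (derivative^[n] u * q) = 0 := by
  induction n with
  | zero =>
    intro u q _ hq
    have : q = 0 := by ext i; exact mem_degLT.1 hq i (Nat.zero_le i)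
    simp [this]
  | succ n ih =>
    intro u q hu hq
    have h1 := ih u (derivative q) ((pow_dvd_pow _ n.le_succ).trans hu) (by
      rw [mem_degLT] at hq ⊢
      intro i hi
      rw [coeff_derivative, hq _ (by omega), zero_mul])
    have h2 : (X ^ 2 - 1 : ℝ[X]) ∣ derivative^[n] u := by
      simpa using pow_sub_dvd_iterate_derivative_of_pow_dvd n hu
    obtain ⟨v, hv⟩ := h2
    have h3 := legJ_derivative (derivative^[n] u * q)
    rw [derivative_mul, map_add, h1, ← Function.iterate_succ_apply' derivative] at h3
    rw [hv] at h3
    simpa using h3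

lemma legPoly_orth {n : ℕ} {q : ℝ[X]} (hq : q ∈ degreeLT ℝ n) : legJ (legPoly n * q) = 0 := by
  have h := legJ_orth_aux n _ q dvd_rfl hq
  rw [legPoly, mul_assoc, C_mul', map_smul, h, smul_zero]

/-- Only the term with all derivatives on `(x - 1)^n` in Rodrigues' formula survives at `1`. -/
lemma legPoly_eval_one (n : ℕ) : (legPoly n).eval 1 = 1 := by
  have h := aeval_iterate_derivative_self (A := ℝ) ((X ^ 2 - 1 : ℝ[X]) ^ n) n 1
    (p' := (X + 1) ^ n) (by
      rw [Algebra.algebraMap_self, map_id, ← mul_pow]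
      congr 1
      simp
      ring)
  rw [coe_aeval_eq_eval] at h
  rw [legPoly, eval_C_mul, h]
  have : (Nat.factorial n : ℝ) ≠ 0 := by positivity
  simp
  norm_num
  field_simp

lemma legPoly_eval_neg_one (n : ℕ) : (legPoly n).eval (-1) ^ 2 = 1 := by
  have h := aeval_iterate_derivative_self (A := ℝ) ((X ^ 2 - 1 : ℝ[X]) ^ n) n (-1)
    (p' := (X - 1) ^ n) (by
      rw [Algebra.algebraMap_self, map_id, ← mul_pow]
      congr 1
      simp
      ring)
  rw [coe_aeval_eq_eval] at h
  rw [legPoly, eval_C_mul, h]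
  have : (Nat.factorial n : ℝ) ≠ 0 := by positivity
  have h2 : ((-1 - 1 : ℝ) ^ n) ^ 2 = (2 ^ n) ^ 2 := by
    rw [← pow_mul, ← pow_mul, mul_comm n 2, pow_mul, pow_mul]; norm_num
  simp only [nsmul_eq_mul, eval_pow, eval_sub, eval_X, eval_one, mul_pow, div_pow, h2]
  field_simp

/-- `∫ P_n² = 2 / (2n + 1)`: integrate `(x P_n²)'` and use that `x P_n' - n P_n` has degree
less than `n`. -/
lemma legPoly_norm (n : ℕ) : (2 * (n : ℝ) + 1) * legJ (legPoly n * legPoly n) = 2 := by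
  set P := legPoly n with hP
  have h1 := legJ_derivative (X * (P * P))
  have h2 : X * derivative P - (n : ℝ) • P ∈ degreeLT ℝ n := by
    have := legPoly_mem n
    rw [← hP] at this
    rw [mem_degLT] at this ⊢
    intro i hi
    have hc : (X * derivative P).coeff i = i * P.coeff i := by
      cases i with
      | zero => simp
      | succ i => rw [coeff_X_mul, coeff_derivative]; push_cast; ring
    rw [coeff_sub, hc, coeff_smul, smul_eq_mul]
    rcases hi.eq_or_lt with rfl | hi
    · ring
    · rw [this i hi]; ring
  have h3 := legPoly_orth h2
  have e : derivative (X * (P * P)) =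
      (2 * (n : ℝ) + 1) • (P * P) + (2 : ℝ) • (P * (X * derivative P - (n : ℝ) • P)) := by
    simp only [derivative_mul, derivative_X, smul_eq_C_mul, C_add, C_mul, C_1]
    have : (C (2:ℝ)) = 2 := rfl
    rw [this]
    ring
  rw [e, map_add, map_smul, map_smul, h3] at h1
  have a1 := legPoly_eval_one n
  have a2 := legPoly_eval_neg_one n
  rw [← hP] at a1 a2
  simp only [eval_mul, eval_X, a1, smul_eq_mul] at h1
  nlinarith

lemma coeff_legL (p : ℝ[X]) (i : ℕ) : (legL p).coeff i =
    p.coeff (i + 2) * ((i + 1) * (i + 2)) - i * (i + 1) * p.coeff i := by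
  have e : legL p = derivative (derivative p) - derivative (X * (X * derivative p)) := by
    rw [legL, ← derivative_sub]; congr 1; ring
  rw [e, coeff_sub, coeff_derivative, coeff_derivative, coeff_derivative, coeff_X_mul]
  have hc : (X * derivative p).coeff i = i * p.coeff i := by
    cases i with
    | zero => simp
    | succ i => rw [coeff_X_mul, coeff_derivative]; push_cast; ring
  rw [hc]; push_cast; ring

lemma legL_mem {n : ℕ} {p : ℝ[X]} (hp : p ∈ degreeLT ℝ n) : legL p ∈ degreeLT ℝ n := by
  rw [mem_degLT] at hp ⊢
  intro i hi
  rw [coeff_legL, hp i hi, hp (i + 2) (by omega)]; ring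

/-- `L p = -n (n + 1) p` modulo degree less than `n`, for `p` of degree at most `n`. -/
lemma legL_add_mem {n : ℕ} {p : ℝ[X]} (hp : p ∈ degreeLT ℝ (n + 1)) :
    legL p + ((n : ℝ) * (n + 1)) • p ∈ degreeLT ℝ n := by
  rw [mem_degLT] at hp ⊢
  intro i hi
  rw [coeff_add, coeff_legL, coeff_smul, hp (i + 2) (by omega), smul_eq_mul]
  rcases hi.eq_or_lt with rfl | hi
  · ring
  · rw [hp i hi]; ring

/-- Green's identity; the boundary terms vanish because `1 - x²` does at `±1`. -/
lemma legL_symm (p q : ℝ[X]) :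
    legJ ((1 - X ^ 2) * derivative p * derivative q) = - legJ (q * legL p) := by
  have h := legJ_derivative (((1 - X ^ 2) * derivative p) * q)
  rw [derivative_mul, map_add] at h
  have : derivative ((1 - X ^ 2) * derivative p) * q = q * legL p := by rw [legL]; ring
  rw [this] at h
  simp at h
  linarith

/-- Spectral gap of the Legendre operator: modulo polynomials of degree less than `M`, the
quadratic form `∫ (1 - x²) p'²` dominates `M (M + 1) ∫ p²`. -/
lemma poly_gap (M : ℕ) : ∀ N : ℕ, ∀ p ∈ degreeLT ℝ N, ∃ s ∈ degreeLT ℝ M,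
    (M : ℝ) * (M + 1) * legJ ((p - s) * (p - s)) ≤
      legJ ((1 - X ^ 2) * derivative p * derivative p) := by
  have hbase : ∀ p ∈ degreeLT ℝ M, ∃ s ∈ degreeLT ℝ M,
      (M : ℝ) * (M + 1) * legJ ((p - s) * (p - s)) ≤
        legJ ((1 - X ^ 2) * derivative p * derivative p) := by
    intro p hp
    refine ⟨p, hp, ?_⟩
    simp only [sub_self, mul_zero, map_zero]
    rw [legJ_apply]
    apply intervalIntegral.integral_nonneg (by norm_num)
    intro x hx
    have : 0 ≤ 1 - x ^ 2 := by nlinarith [hx.1, hx.2]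
    simp only [eval_mul, eval_sub, eval_one, eval_pow, eval_X, mul_assoc]
    exact mul_nonneg this (mul_self_nonneg _)
  intro N
  induction N with
  | zero => exact fun p hp => hbase p (degLT_mono (Nat.zero_le M) hp)
  | succ n ih =>
    intro p hp
    by_cases hn : n < M
    · exact hbase p (degLT_mono hn hp)
    push Not at hn
    obtain ⟨c, hc⟩ := sub_lead_mem hp
    obtain ⟨s, hs, h⟩ := ih _ hc
    refine ⟨s, hs, ?_⟩
    set P := legPoly n with hP
    set r := p - c • P with hr
    have hpr : p = r + c • P := by rw [hr]; abel
    -- both cross terms between `r` and `P_n` vanish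
    have o1 : legJ (P * (r - s)) = 0 :=
      legPoly_orth (Submodule.sub_mem _ hc (degLT_mono hn hs))
    have o2 : legJ ((1 - X ^ 2) * derivative r * derivative P) = 0 := by
      rw [legL_symm, legPoly_orth (legL_mem hc), neg_zero]
    have o3 : legJ ((1 - X ^ 2) * derivative P * derivative P) =
        (n : ℝ) * (n + 1) * legJ (P * P) := by
      have h1 := legPoly_orth (legL_add_mem (legPoly_mem n))
      rw [mul_add, map_add, mul_smul_comm, map_smul, smul_eq_mul] at h1
      rw [legL_symm]
      linarith
    have e1 : (p - s) * (p - s) =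
        (r - s) * (r - s) + ((2 * c) • (P * (r - s)) + (c ^ 2) • (P * P)) := by
      rw [hpr]
      simp only [smul_eq_C_mul, C_mul, C_pow]
      have : (C (2:ℝ)) = 2 := rfl
      rw [this]
      ring
    have e2 : (1 - X ^ 2) * derivative p * derivative p =
        (1 - X ^ 2) * derivative r * derivative r +
        ((2 * c) • ((1 - X ^ 2) * derivative r * derivative P) +
          (c ^ 2) • ((1 - X ^ 2) * derivative P * derivative P)) := by
      rw [hpr]
      simp only [smul_eq_C_mul, C_mul, C_pow, derivative_add, derivative_C_mul]
      have : (C (2:ℝ)) = 2 := rfl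
      rw [this]
      ring
    rw [e1, e2]
    simp only [map_add, map_smul, o1, o2, o3, smul_eq_mul]
    have hMn : (M : ℝ) ≤ n := by exact_mod_cast hn
    have hM0 : (0 : ℝ) ≤ M := Nat.cast_nonneg M
    have hm : (M : ℝ) * (M + 1) ≤ n * (n + 1) := by nlinarith
    have h5 := mul_le_mul_of_nonneg_right hm
      (mul_nonneg (sq_nonneg c) (legJ_sq_nonneg P))
    nlinarith
end

section
open Polynomial

lemma int_sq_add_le {a b : ℝ} (hab : a ≤ b) {v w : ℝ → ℝ} (hv : Continuous v)
    (hw : Continuous w) : ∫ x in a..b, (v x + w x) ^ 2 ≤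
      2 * (∫ x in a..b, (v x) ^ 2) + 2 * ∫ x in a..b, (w x) ^ 2 := by
  rw [← intervalIntegral.integral_const_mul, ← intervalIntegral.integral_const_mul,
    ← intervalIntegral.integral_add (Continuous.intervalIntegrable (by fun_prop) _ _)
      (Continuous.intervalIntegrable (by fun_prop) _ _)]
  apply intervalIntegral.integral_mono_on hab (Continuous.intervalIntegrable (by fun_prop) _ _)
    (Continuous.intervalIntegrable (by fun_prop) _ _)
  intro x _
  nlinarith [sq_nonneg (v x - w x)]

lemma int_sq_le_of_abs_le {u : ℝ → ℝ} (hu : Continuous u) {d : ℝ}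
    (h : ∀ x ∈ Set.Icc (-1 : ℝ) 1, |u x| ≤ d) : ∫ x in (-1 : ℝ)..1, (u x) ^ 2 ≤ 2 * d ^ 2 := by
  have := intervalIntegral.integral_mono_on (a := (-1 : ℝ)) (b := 1) (by norm_num)
    (Continuous.intervalIntegrable (μ := MeasureTheory.volume) (u := fun x => (u x) ^ 2)
      (by fun_prop) _ _)
    (continuous_const.intervalIntegrable (u := fun _ => d ^ 2) _ _)
    (fun x hx => sq_le_sq' (abs_le.1 (h x hx)).1 (abs_le.1 (h x hx)).2)
  rw [intervalIntegral.integral_const] at this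
  norm_num at this
  linarith

lemma exists_antideriv {N : ℕ} {q : ℝ[X]} (hq : q ∈ degreeLT ℝ N) :
    ∃ Q ∈ degreeLT ℝ (N + 1), derivative Q = q := by
  refine ⟨∑ i ∈ Finset.range N, C (q.coeff i / (i + 1)) * X ^ (i + 1), ?_, ?_⟩
  · refine Submodule.sum_mem _ fun i hi => ?_
    rw [mem_degLT]
    intro j hj
    have := Finset.mem_range.1 hi
    rw [coeff_C_mul_X_pow, if_neg (by omega)]
  · rw [derivative_sum]
    have : ∀ i ∈ Finset.range N, derivative (C (q.coeff i / ((i : ℝ) + 1)) * X ^ (i + 1)) =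
        C (q.coeff i) * X ^ i := by
      intro i _
      rw [derivative_C_mul_X_pow]
      have : (i : ℝ) + 1 ≠ 0 := by positivity
      push_cast
      simp [this]
    rw [Finset.sum_congr rfl this]
    ext j
    simp only [finsetSum_coeff, coeff_C_mul_X_pow]
    rw [Finset.sum_ite_eq]
    split_ifs with h
    · rfl
    · rw [mem_degLT.1 hq j (by simpa using h)]

/-! ### Jackson inequalities in `L²(-1,1)` -/

/-- First-order Jackson inequality in `L²(-1,1)`, up to `ε`. The derivative is replaced by a nearby
polynomial (Weierstrass), to whose antiderivative the spectral gap applies. -/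
lemma jackson_one {f : ℝ → ℝ} (hf : ContDiff ℝ 1 f) {M : ℕ} (hM : 1 ≤ M) {ε : ℝ} (hε : 0 < ε) :
    ∃ s ∈ degreeLT ℝ M, ∫ x in (-1 : ℝ)..1, (f x - s.eval x) ^ 2 ≤
      4 / (M : ℝ) ^ 2 * (∫ x in (-1 : ℝ)..1, (deriv f x) ^ 2) + ε := by
  have hcf := hf.continuous
  have hdf : Differentiable ℝ f := hf.differentiable (by norm_num)
  have hcd : Continuous (deriv f) := hf.continuous_deriv (by norm_num)
  obtain ⟨d, hd0, hd⟩ : ∃ d : ℝ, 0 < d ∧ d ^ 2 = ε / 24 :=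
    ⟨Real.sqrt (ε / 24), by positivity, Real.sq_sqrt (by positivity)⟩
  obtain ⟨q, hq⟩ := exists_polynomial_near_of_continuousOn (-1) 1 (deriv f) hcd.continuousOn d hd0
  obtain ⟨p, hpq, hp1⟩ : ∃ p : ℝ[X], derivative p = q ∧ p.eval (-1) = f (-1) := by
    obtain ⟨Q, -, hQ⟩ := exists_antideriv (N := q.natDegree + 1) (q := q)
      (mem_degLT.2 fun i hi => coeff_eq_zero_of_natDegree_lt (by omega))
    exact ⟨Q + C (f (-1) - Q.eval (-1)), by simp [hQ], by simp⟩
  have hder : ∀ x, deriv (fun y => f y - p.eval y) x = deriv f x - q.eval x := by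
    intro x
    rw [deriv_fun_sub (hdf x) p.differentiableAt, p.deriv, hpq]
  have hfp : ∀ x ∈ Set.Icc (-1 : ℝ) 1, |f x - p.eval x| ≤ 2 * d := by
    intro x hx
    have := (convex_Icc (-1 : ℝ) 1).norm_image_sub_le_of_norm_deriv_le
      (f := fun y => f y - p.eval y) (C := d) (x := -1) (y := x)
      (fun y _ => (hdf y).sub p.differentiableAt)
      (fun y hy => by
        rw [hder, Real.norm_eq_abs, abs_sub_comm]; exact (hq y hy).le) (by simp) hx
    simp only [hp1, sub_self, sub_zero, Real.norm_eq_abs] at this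
    have h2 : |x - -1| ≤ 2 := by rw [abs_le]; constructor <;> linarith [hx.1, hx.2]
    nlinarith
  obtain ⟨s, hs, hgap⟩ := poly_gap M (p.natDegree + 1) p
    (mem_degLT.2 fun i hi => coeff_eq_zero_of_natDegree_lt (by omega))
  refine ⟨s, hs, ?_⟩
  have i1 := int_sq_add_le (a := -1) (b := 1) (by norm_num)
    (v := fun x => f x - p.eval x) (w := fun x => p.eval x - s.eval x) (by fun_prop) (by fun_prop)
  have i2 := int_sq_le_of_abs_le (u := fun x => f x - p.eval x) (by fun_prop) hfp
  have i3 := int_sq_add_le (a := -1) (b := 1) (by norm_num)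
    (v := fun x => deriv f x) (w := fun x => q.eval x - deriv f x) (by fun_prop) (by fun_prop)
  have i4 := int_sq_le_of_abs_le (u := fun x => q.eval x - deriv f x) (by fun_prop)
    (fun x hx => (hq x hx).le)
  have i5 : legJ ((1 - X ^ 2) * derivative p * derivative p) ≤
      ∫ x in (-1 : ℝ)..1, (q.eval x) ^ 2 := by
    rw [legJ_apply]
    apply intervalIntegral.integral_mono_on (by norm_num)
      (Polynomial.continuous _ |>.intervalIntegrable _ _)
      (Continuous.intervalIntegrable (by fun_prop) _ _)
    intro x _
    simp only [hpq, eval_mul, eval_sub, eval_one, eval_pow, eval_X]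
    nlinarith [sq_nonneg (x * q.eval x)]
  have i6 : legJ ((p - s) * (p - s)) = ∫ x in (-1 : ℝ)..1, (p.eval x - s.eval x) ^ 2 := by
    rw [legJ_apply]; simp only [eval_mul, eval_sub, sq]
  have hM1 : (1 : ℝ) ≤ M := by exact_mod_cast hM
  simp only [sub_add_sub_cancel, add_sub_cancel] at i1 i3
  set I := ∫ x in (-1 : ℝ)..1, (deriv f x) ^ 2
  set J := ∫ x in (-1 : ℝ)..1, (p.eval x - s.eval x) ^ 2
  rw [i6] at hgap
  have hJ0 : 0 ≤ J := by rw [← i6]; exact legJ_sq_nonneg _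
  have hMJ : (M : ℝ) ^ 2 * J ≤ 2 * I + 4 * d ^ 2 := by nlinarith
  have hJ : J ≤ (2 * I + 4 * d ^ 2) / (M : ℝ) ^ 2 := by
    rw [le_div_iff₀ (by positivity)]; linarith
  have hd2 : 4 * d ^ 2 / (M : ℝ) ^ 2 ≤ 4 * d ^ 2 :=
    div_le_self (by positivity) (one_le_pow₀ hM1)
  rw [add_div] at hJ
  have : 4 / (M : ℝ) ^ 2 * I = 2 * (2 * I / (M : ℝ) ^ 2) := by ring
  rw [this]
  linarith

/-- Higher-order Jackson inequality in `L²(-1,1)`, up to `ε`, by iterating `jackson_one`: subtract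
from `f` an antiderivative of a good approximant of `f'`. -/
lemma jackson (m : ℕ) : ∀ (M : ℕ) (f : ℝ → ℝ), ContDiff ℝ m f → m ≤ M → ∀ ε : ℝ, 0 < ε →
    ∃ s ∈ degreeLT ℝ M, ∫ x in (-1 : ℝ)..1, (f x - s.eval x) ^ 2 ≤
      4 ^ m / (M.descFactorial m : ℝ) ^ 2 * (∫ x in (-1 : ℝ)..1, (iteratedDeriv m f x) ^ 2) + ε := by
  induction m with
  | zero =>
    intro M f hf _ ε hε
    refine ⟨0, Submodule.zero_mem _, ?_⟩
    simp [hε.le]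
  | succ m ih =>
    intro M f hf hmM ε hε
    obtain ⟨M, rfl⟩ : ∃ M', M = M' + 1 := ⟨M - 1, by omega⟩
    have hf' : ContDiff ℝ m (deriv f) := by
      have : ContDiff ℝ ((m : WithTop ℕ∞) + 1) f := by exact_mod_cast hf
      exact (contDiff_succ_iff_deriv.1 this).2.2
    have hf1 : ContDiff ℝ 1 f := hf.of_le (by exact_mod_cast Nat.succ_le_succ (Nat.zero_le m))
    obtain ⟨q, hq, hqi⟩ := ih M (deriv f) hf' (by omega) (ε / 8) (by positivity)
    obtain ⟨Q, hQ, hQq⟩ := exists_antideriv hq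
    obtain ⟨s, hs, hsi⟩ := jackson_one (f := fun x => f x - Q.eval x) (M := M + 1)
      (hf1.sub (by simpa using Q.contDiff_aeval (𝕜 := ℝ) 1)) (by omega) (half_pos hε)
    refine ⟨Q + s, Submodule.add_mem _ hQ hs, ?_⟩
    have hder : ∀ x, deriv (fun y => f y - Q.eval y) x = deriv f x - q.eval x := by
      intro x
      rw [deriv_fun_sub (hf1.differentiable (by norm_num) x) Q.differentiableAt, Q.deriv, hQq]
    simp only [hder] at hsi
    simp only [eval_add, ← sub_sub, iteratedDeriv_succ', Nat.succ_descFactorial_succ]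
    have hM1 : (1 : ℝ) ≤ ((M + 1 : ℕ) : ℝ) := by exact_mod_cast Nat.succ_le_succ (Nat.zero_le M)
    have h4 : 4 / ((M + 1 : ℕ) : ℝ) ^ 2 ≤ 4 := div_le_self (by norm_num) (one_le_pow₀ hM1)
    have h5 := mul_le_mul_of_nonneg_left hqi
      (show 0 ≤ 4 / ((M + 1 : ℕ) : ℝ) ^ 2 by positivity)
    have h6 : 4 / ((M + 1 : ℕ) : ℝ) ^ 2 * (ε / 8) ≤ 4 * (ε / 8) :=
      mul_le_mul_of_nonneg_right h4 (by positivity)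
    rw [mul_add, ← mul_assoc, div_mul_div_comm, ← pow_succ', ← mul_pow] at h5
    rw [Nat.cast_mul]
    linarith

/-! ### Legendre partial sums -/

/-- The degree `< M` Legendre partial sum of `g` on `[-1, 1]`. -/
noncomputable def legProj (g : ℝ → ℝ) (M : ℕ) : ℝ[X] :=
  ∑ j ∈ Finset.range M,
    ((2 * (j : ℝ) + 1) / 2 * ∫ x in (-1 : ℝ)..1, g x * (legPoly j).eval x) • legPoly j

lemma legProj_mem (g : ℝ → ℝ) (M : ℕ) : legProj g M ∈ degreeLT ℝ M :=
  Submodule.sum_mem _ fun j hj =>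
    Submodule.smul_mem _ _ (degLT_mono (Finset.mem_range.1 hj) (legPoly_mem j))

/-- The error of the partial sum is orthogonal to polynomials of degree less than `M`; the induction
variable `N ≤ M` peels off leading terms. -/
lemma legProj_orth {g : ℝ → ℝ} (hg : Continuous g) (M : ℕ) : ∀ N ≤ M, ∀ q ∈ degreeLT ℝ N,
    ∫ x in (-1 : ℝ)..1, (g x - (legProj g M).eval x) * q.eval x = 0 := by
  have hP : ∀ j < M, ∫ x in (-1 : ℝ)..1, (g x - (legProj g M).eval x) * (legPoly j).eval x = 0 := by
    intro j hj
    have h1 : legJ (legProj g M * legPoly j) = ∫ x in (-1 : ℝ)..1, g x * (legPoly j).eval x := by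
      rw [legProj, Finset.sum_mul, map_sum, Finset.sum_eq_single_of_mem j (Finset.mem_range.2 hj)]
      · rw [smul_mul_assoc, map_smul, smul_eq_mul]
        have := legPoly_norm j
        linear_combination (∫ x in (-1 : ℝ)..1, g x * (legPoly j).eval x) / 2 * this
      · intro i _ hij
        rw [smul_mul_assoc, map_smul]
        rcases lt_or_gt_of_ne hij with h | h
        · rw [mul_comm (legPoly i), legPoly_orth (degLT_mono h (legPoly_mem i)), smul_zero]
        · rw [legPoly_orth (degLT_mono h (legPoly_mem j)), smul_zero]
    rw [legJ_apply] at h1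
    simp only [eval_mul] at h1
    simp only [sub_mul]
    rw [intervalIntegral.integral_sub (Continuous.intervalIntegrable (by fun_prop) _ _)
      (Continuous.intervalIntegrable (by fun_prop) _ _), h1, sub_self]
  intro N
  induction N with
  | zero =>
    intro _ q hq
    have : q = 0 := by ext i; exact mem_degLT.1 hq i (Nat.zero_le i)
    simp [this]
  | succ n ih =>
    intro hn q hq
    obtain ⟨c, hc⟩ := sub_lead_mem hq
    have h1 := ih (by omega) _ hc
    have h2 := hP n (by omega)
    have e : ∀ x, (g x - (legProj g M).eval x) * q.eval x =
        (g x - (legProj g M).eval x) * (q - c • legPoly n).eval x +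
          c * ((g x - (legProj g M).eval x) * (legPoly n).eval x) := by
      intro x; simp; ring
    simp only [e]
    rw [intervalIntegral.integral_add (Continuous.intervalIntegrable (by fun_prop) _ _)
      (Continuous.intervalIntegrable (by fun_prop) _ _), h1,
      intervalIntegral.integral_const_mul, h2]
    simp

/-- The partial sum is at least as close to `g` as any other polynomial of degree less than `M`. -/
lemma legProj_best {g : ℝ → ℝ} (hg : Continuous g) {M : ℕ} {p : ℝ[X]} (hp : p ∈ degreeLT ℝ M) :
    ∫ x in (-1 : ℝ)..1, (g x - (legProj g M).eval x) ^ 2 ≤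
      ∫ x in (-1 : ℝ)..1, (g x - p.eval x) ^ 2 := by
  have h1 := legProj_orth hg M M le_rfl _ (Submodule.sub_mem _ (legProj_mem g M) hp)
  have e : ∀ x, (g x - p.eval x) ^ 2 = (g x - (legProj g M).eval x) ^ 2 +
      (2 * ((g x - (legProj g M).eval x) * (legProj g M - p).eval x) +
        ((legProj g M - p).eval x) ^ 2) := by
    intro x; simp; ring
  simp only [e]
  rw [intervalIntegral.integral_add (Continuous.intervalIntegrable (by fun_prop) _ _)
      (Continuous.intervalIntegrable (by fun_prop) _ _),
      intervalIntegral.integral_add (Continuous.intervalIntegrable (by fun_prop) _ _)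
      (Continuous.intervalIntegrable (by fun_prop) _ _),
      intervalIntegral.integral_const_mul, h1]
  have : 0 ≤ ∫ x in (-1 : ℝ)..1, ((legProj g M - p).eval x) ^ 2 :=
    intervalIntegral.integral_nonneg (by norm_num) fun x _ => sq_nonneg _
  linarith

lemma legProj_error {m M : ℕ} {g : ℝ → ℝ} (hg : ContDiff ℝ m g) (hmM : m ≤ M) :
    ∫ x in (-1 : ℝ)..1, (g x - (legProj g M).eval x) ^ 2 ≤
      4 ^ m / (M.descFactorial m : ℝ) ^ 2 * ∫ x in (-1 : ℝ)..1, (iteratedDeriv m g x) ^ 2 := by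
  refine le_of_forall_pos_le_add fun ε hε => ?_
  obtain ⟨s, hs, h⟩ := jackson m M g hg hmM ε hε
  exact (legProj_best hg.continuous hs).trans h

/-- Rodrigues' formula for functions agrees with its algebraic version. -/
lemma legendreP_eq (n : ℕ) (x : ℝ) : legendreP n x = (legPoly n).eval x := by
  have h : ∀ (k : ℕ) (p : ℝ[X]), iteratedDeriv k (fun y => p.eval y) =
      fun y => (derivative^[k] p).eval y := by
    intro k
    induction k with
    | zero => intro p; simp
    | succ k ih =>
      intro p
      have : deriv (fun y => p.eval y) = fun y => (derivative p).eval y := by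
        funext y; exact p.deriv
      rw [iteratedDeriv_succ', this, ih, Function.iterate_succ_apply]
  have h2 := h n ((X ^ 2 - 1) ^ n)
  simp only [eval_pow, eval_sub, eval_X, eval_one] at h2
  rw [legendreP, h2, legPoly, eval_C_mul]
end

/-! ### Rescaling to the dyadic pieces -/

section
open Polynomial

lemma wavelet_norm_sq {l : ℝ} (hl : 0 < l) (k j : ℕ) :
    ((2 : ℝ) ^ ((k : ℝ) / 2) * Real.sqrt ((2 * (j : ℝ) + 1) / (2 * l))) ^ 2 * (l / 2 ^ k) =
      (2 * (j : ℝ) + 1) / 2 := by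
  have h1 : ((2 : ℝ) ^ ((k : ℝ) / 2)) ^ 2 = 2 ^ k := by
    rw [← Real.rpow_natCast, ← Real.rpow_mul (by norm_num)]
    norm_num
  rw [mul_pow, h1, Real.sq_sqrt (by positivity)]
  field_simp

/-- Affine change of variables from `[-1, 1]` onto the `n`-th dyadic piece, `n = i + 1`. -/
lemma piece_integral (l : ℝ) (K : ℕ) (i : ℕ) (F : ℝ → ℝ) :
    ∫ x in ((i : ℝ) * l / 2 ^ K)..(((i + 1 : ℕ) : ℝ) * l / 2 ^ K), F x =
      l / 2 ^ (K + 1) * ∫ t in (-1 : ℝ)..1, F (l / 2 ^ (K + 1) * t +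
        (2 * (i : ℝ) + 1) * (l / 2 ^ (K + 1))) := by
  rw [intervalIntegral.mul_integral_comp_mul_add]
  congr 1 <;> (push_cast; field_simp; ring)

/-- On the piece with index `i`, exactly the wavelets with `n = i + 1` are non-zero. -/
lemma legWavelet_piece {l : ℝ} (hl : 0 < l) (K i n j : ℕ) {x : ℝ}
    (hx1 : (i : ℝ) * l / 2 ^ K ≤ x) (hx2 : x < ((i + 1 : ℕ) : ℝ) * l / 2 ^ K) :
    legWavelet l (K + 1) n j x = if n = i + 1 then
      (2 : ℝ) ^ (((K + 1 : ℕ) : ℝ) / 2) * Real.sqrt ((2 * (j : ℝ) + 1) / (2 * l)) *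
        (legPoly j).eval (((2 : ℝ) ^ (K + 1) / l) * x - 2 * (n : ℝ) + 1) else 0 := by
  simp only [legWavelet, legendreP_eq, Nat.add_sub_cancel]
  by_cases hn : n = i + 1
  · rw [if_pos hn, if_pos]
    rw [hn]
    refine ⟨?_, hx2⟩
    push_cast
    rwa [add_sub_cancel_right]
  · rw [if_neg hn, if_neg]
    rintro ⟨h1, h2⟩
    apply hn
    have hK : (0 : ℝ) < 2 ^ K := by positivity
    have a1 := h1.trans_lt hx2
    have a2 := hx1.trans_lt h2
    rw [div_lt_div_iff_of_pos_right hK] at a1 a2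
    have b1 := lt_of_mul_lt_mul_right a1 hl.le
    have b2 := lt_of_mul_lt_mul_right a2 hl.le
    have c1 : n < i + 2 := by
      have : (n : ℝ) < ((i + 2 : ℕ) : ℝ) := by push_cast at b1 ⊢; linarith
      exact_mod_cast this
    have c2 : i < n := by exact_mod_cast b2
    omega

lemma piece_affine {l : ℝ} (hl : 0 < l) (K i : ℕ) (t : ℝ) :
    ((2 : ℝ) ^ (K + 1) / l) * (l / 2 ^ (K + 1) * t + (2 * (i : ℝ) + 1) * (l / 2 ^ (K + 1))) -
      2 * ((i + 1 : ℕ) : ℝ) + 1 = t := by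
  push_cast
  field_simp
  ring

lemma waveletCoeff_piece {l : ℝ} (hl : 0 < l) (K i j : ℕ) (hi : i < 2 ^ K) (f : ℝ → ℝ) :
    waveletCoeff l (K + 1) f (i + 1) j =
      (2 : ℝ) ^ (((K + 1 : ℕ) : ℝ) / 2) * Real.sqrt ((2 * (j : ℝ) + 1) / (2 * l)) *
      (l / 2 ^ (K + 1)) * ∫ t in (-1 : ℝ)..1, f (l / 2 ^ (K + 1) * t +
        (2 * (i : ℝ) + 1) * (l / 2 ^ (K + 1))) * (legPoly j).eval t := by
  set a := (i : ℝ) * l / 2 ^ K with ha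
  set b := ((i + 1 : ℕ) : ℝ) * l / 2 ^ K with hb
  set A := (2 : ℝ) ^ (((K + 1 : ℕ) : ℝ) / 2) * Real.sqrt ((2 * (j : ℝ) + 1) / (2 * l)) with hA
  set φ : ℝ → ℝ := fun x => f x * (A * (legPoly j).eval
    (((2 : ℝ) ^ (K + 1) / l) * x - 2 * ((i + 1 : ℕ) : ℝ) + 1)) with hφ
  have hind : ∀ x, f x * legWavelet l (K + 1) (i + 1) j x = (Set.Ico a b).indicator φ x := by
    intro x
    by_cases hx : x ∈ Set.Ico a b
    · rw [Set.indicator_of_mem hx, legWavelet_piece hl K i (i + 1) j hx.1 hx.2, if_pos rfl]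
    · rw [Set.indicator_of_notMem hx, legWavelet, if_neg, mul_zero]
      rintro ⟨h1, h2⟩
      refine hx ⟨?_, h2⟩
      rw [Nat.add_sub_cancel] at h1
      push_cast at h1
      rwa [add_sub_cancel_right] at h1
  have ha0 : 0 ≤ a := by positivity
  have hab : a ≤ b := by
    rw [ha, hb]; gcongr; omega
  have hbl : b ≤ l := by
    rw [hb, div_le_iff₀ (by positivity), mul_comm]
    gcongr
    exact_mod_cast hi
  rw [waveletCoeff]
  simp only [hind]
  rw [intervalIntegral.integral_of_le hl.le, ← MeasureTheory.integral_Ico_eq_integral_Ioc,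
    MeasureTheory.setIntegral_indicator measurableSet_Ico,
    Set.inter_eq_right.2 (Set.Ico_subset_Ico ha0 hbl),
    MeasureTheory.integral_Ico_eq_integral_Ioc, ← intervalIntegral.integral_of_le hab,
    ha, hb, piece_integral]
  simp only [hφ, piece_affine hl]
  rw [mul_comm A, mul_assoc, ← intervalIntegral.integral_const_mul A]
  congr 2
  funext t
  ring

/-- On each dyadic piece the wavelet projection is the rescaled Legendre partial sum. -/
lemma waveletProj_piece {l : ℝ} (hl : 0 < l) (K M i : ℕ) (hi : i < 2 ^ K) (f : ℝ → ℝ) {x : ℝ}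
    (hx1 : (i : ℝ) * l / 2 ^ K ≤ x) (hx2 : x < ((i + 1 : ℕ) : ℝ) * l / 2 ^ K) :
    waveletProj l (K + 1) M f x =
      (legProj (fun t => f (l / 2 ^ (K + 1) * t + (2 * (i : ℝ) + 1) * (l / 2 ^ (K + 1)))) M).eval
        (((2 : ℝ) ^ (K + 1) / l) * x - 2 * ((i + 1 : ℕ) : ℝ) + 1) := by
  rw [waveletProj, Nat.add_sub_cancel, Finset.sum_eq_single_of_mem (i + 1)
    (Finset.mem_Icc.2 ⟨by omega, hi⟩)]
  · rw [legProj, eval_finsetSum]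
    refine Finset.sum_congr rfl fun j _ => ?_
    rw [legWavelet_piece hl K i (i + 1) j hx1 hx2, if_pos rfl, waveletCoeff_piece hl K i j hi,
      eval_smul, smul_eq_mul, ← wavelet_norm_sq hl (K + 1) j]
    ring
  · intro n _ hn
    refine Finset.sum_eq_zero fun j _ => ?_
    rw [legWavelet_piece hl K i n j hx1 hx2, if_neg hn, mul_zero]

/-- The error estimate on a single dyadic piece, obtained from `[-1, 1]` by rescaling. -/
lemma piece_error {l : ℝ} (hl : 0 < l) {m M : ℕ} (hmM : m ≤ M) (K i : ℕ) (hi : i < 2 ^ K)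
    {f : ℝ → ℝ} (hf : ContDiff ℝ m f) :
    ∫ x in ((i : ℝ) * l / 2 ^ K)..(((i + 1 : ℕ) : ℝ) * l / 2 ^ K),
        (f x - waveletProj l (K + 1) M f x) ^ 2 ≤
      4 ^ m / (M.descFactorial m : ℝ) ^ 2 * ((l / 2 ^ (K + 1)) ^ m) ^ 2 *
        ∫ x in ((i : ℝ) * l / 2 ^ K)..(((i + 1 : ℕ) : ℝ) * l / 2 ^ K),
          (iteratedDeriv m f x) ^ 2 := by
  have hab : (i : ℝ) * l / 2 ^ K ≤ ((i + 1 : ℕ) : ℝ) * l / 2 ^ K := by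
    gcongr; omega
  rw [intervalIntegral.integral_congr_Ioo_of_le hab (g := fun x => (f x -
      (legProj (fun t => f (l / 2 ^ (K + 1) * t + (2 * (i : ℝ) + 1) * (l / 2 ^ (K + 1)))) M).eval
        (((2 : ℝ) ^ (K + 1) / l) * x - 2 * ((i + 1 : ℕ) : ℝ) + 1)) ^ 2)
      (fun x hx => by simp only [waveletProj_piece hl K M i hi f hx.1.le hx.2])]
  rw [piece_integral, piece_integral]
  simp only [piece_affine hl]
  set h := l / 2 ^ (K + 1) with hh
  set c := (2 * (i : ℝ) + 1) * h
  have hh0 : 0 < h := by positivity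
  have hg : ContDiff ℝ m (fun t => f (h * t + c)) := hf.comp (by fun_prop)
  have hd : iteratedDeriv m (fun t => f (h * t + c)) =
      fun t => h ^ m * iteratedDeriv m f (h * t + c) := by
    have h1 := iteratedDeriv_comp_const_mul (n := m) (f := fun y => f (y + c))
      (hf.comp (by fun_prop)) h
    rw [h1, iteratedDeriv_comp_add_const]
  have e := legProj_error hg hmM
  rw [hd] at e
  simp only [mul_pow] at e
  rw [intervalIntegral.integral_const_mul] at e
  have := mul_le_mul_of_nonneg_left e hh0.le
  linarith

lemma descFactorial_bound {m M : ℕ} (hm : 1 ≤ m) (hM : 2 ≤ M) (hmM : m ≤ M) :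
    1 / (M.descFactorial m : ℝ) ≤ (m : ℝ) ^ m * ((M : ℝ) - 1) ^ (-(m : ℤ)) := by
  have hM1 : (0 : ℝ) < (M : ℝ) - 1 := by
    have : (2 : ℝ) ≤ M := by exact_mod_cast hM
    linarith
  have h0 : (0 : ℝ) < M.descFactorial m := by exact_mod_cast Nat.descFactorial_pos.2 hmM
  have h1 : ((M + 1 - m : ℕ) : ℝ) ^ m ≤ M.descFactorial m := by
    exact_mod_cast Nat.pow_sub_le_descFactorial M m
  have h2 : (M : ℝ) - 1 ≤ m * ((M + 1 - m : ℕ) : ℝ) := by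
    rw [Nat.cast_sub (by omega)]
    have a : (1 : ℝ) ≤ m := by exact_mod_cast hm
    have b : (m : ℝ) ≤ M := by exact_mod_cast hmM
    push_cast
    nlinarith
  have h3 := pow_le_pow_left₀ hM1.le h2 m
  rw [mul_pow] at h3
  rw [zpow_neg, zpow_natCast, ← div_eq_mul_inv, div_le_div_iff₀ h0 (by positivity)]
  have : (m : ℝ) ^ m * ((M + 1 - m : ℕ) : ℝ) ^ m ≤ (m : ℝ) ^ m * M.descFactorial m := by gcongr
  linarith
end


/-- When `M ≥ max 2 m`, the `L²` error bound reduces to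
`‖f - Ψ_{k,M-1}(f)‖_{L²(0,l)} ≤ C (M-1)^{-m} 2^{-km} ‖f^{(m)}‖_{L²(0,l)}`. -/
theorem stmt_3 (m : ℕ) (hm : 1 ≤ m) (l : ℝ) (hl : 0 < l) :
    ∃ C : ℝ, 0 < C ∧ ∀ M : ℕ, max 2 m ≤ M → ∀ k : ℕ, 1 ≤ k →
      ∀ f : ℝ → ℝ, ContDiff ℝ m f →
        Real.sqrt (∫ x in (0 : ℝ)..l, (f x - waveletProj l k M f x) ^ 2)
          ≤ C * ((M : ℝ) - 1) ^ (-(m : ℤ)) * (2 : ℝ) ^ (-((k : ℤ) * (m : ℤ))) *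
              Real.sqrt (∫ x in (0 : ℝ)..l, (iteratedDeriv m f x) ^ 2) := by
  refine ⟨(2 * m * l) ^ m, by positivity, ?_⟩
  intro M hM k hk f hf
  obtain ⟨K, rfl⟩ : ∃ K, k = K + 1 := ⟨k - 1, by omega⟩
  have hM2 : 2 ≤ M := (le_max_left _ _).trans hM
  have hmM : m ≤ M := (le_max_right _ _).trans hM
  set a : ℕ → ℝ := fun i => (i : ℝ) * l / 2 ^ K with ha
  have ha0 : a 0 = 0 := by simp [ha]
  have hal : a (2 ^ K) = l := by simp [ha]
  have hmono : ∀ i, a i ≤ a (i + 1) := fun i => by simp only [ha]; gcongr; omega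
  have hd : Continuous (iteratedDeriv m f) := hf.continuous_iteratedDeriv' m
  have hcf := hf.continuous
  have hint1 : ∀ i < 2 ^ K, IntervalIntegrable
      (fun x => (f x - waveletProj l (K + 1) M f x) ^ 2) MeasureTheory.volume (a i) (a (i + 1)) := by
    intro i hi
    refine IntervalIntegrable.congr_uIoo (f := fun x => (f x -
      (legProj (fun t => f (l / 2 ^ (K + 1) * t + (2 * (i : ℝ) + 1) * (l / 2 ^ (K + 1)))) M).eval
        (((2 : ℝ) ^ (K + 1) / l) * x - 2 * ((i + 1 : ℕ) : ℝ) + 1)) ^ 2)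
      (Continuous.intervalIntegrable (by fun_prop) _ _) ?_
    intro x hx
    rw [Set.uIoo_of_le (hmono i)] at hx
    simp only [waveletProj_piece hl K M i hi f hx.1.le hx.2]
  have s1 := intervalIntegral.sum_integral_adjacent_intervals hint1
  have s2 := intervalIntegral.sum_integral_adjacent_intervals (a := a) (n := 2 ^ K)
    (f := fun x => (iteratedDeriv m f x) ^ 2) (μ := MeasureTheory.volume)
    (fun i _ => Continuous.intervalIntegrable (by fun_prop) _ _)
  rw [ha0, hal] at s1 s2
  have hI0 : 0 ≤ ∫ x in (0 : ℝ)..l, (iteratedDeriv m f x) ^ 2 :=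
    intervalIntegral.integral_nonneg hl.le fun x _ => sq_nonneg _
  have hM1 : (0 : ℝ) < (M : ℝ) - 1 := by
    have : (2 : ℝ) ≤ M := by exact_mod_cast hM2
    linarith
  set B := (2 * (m : ℝ) * l) ^ m * ((M : ℝ) - 1) ^ (-(m : ℤ)) *
    (2 : ℝ) ^ (-(((K + 1 : ℕ) : ℤ) * (m : ℤ))) with hB
  have hB0 : 0 ≤ B := by positivity
  have hpow : (2 : ℝ) ^ (-(((K + 1 : ℕ) : ℤ) * (m : ℤ))) = ((2 ^ (K + 1)) ^ m)⁻¹ := by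
    rw [zpow_neg, zpow_mul, zpow_natCast, zpow_natCast]
  have hconst : 4 ^ m / (M.descFactorial m : ℝ) ^ 2 * ((l / 2 ^ (K + 1)) ^ m) ^ 2 ≤ B ^ 2 := by
    have e : 4 ^ m / (M.descFactorial m : ℝ) ^ 2 * ((l / 2 ^ (K + 1)) ^ m) ^ 2 =
        (2 ^ m * l ^ m * ((2 ^ (K + 1)) ^ m)⁻¹ * (1 / (M.descFactorial m : ℝ))) ^ 2 := by
      have : (4 : ℝ) ^ m = (2 ^ m) ^ 2 := by rw [← pow_mul, mul_comm m 2, pow_mul]; norm_num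
      rw [this, div_pow]
      ring
    have e2 : B = 2 ^ m * l ^ m * ((2 ^ (K + 1)) ^ m)⁻¹ *
        ((m : ℝ) ^ m * ((M : ℝ) - 1) ^ (-(m : ℤ))) := by
      rw [hB, hpow, mul_pow, mul_pow]; ring
    rw [e, e2]
    apply pow_le_pow_left₀ (by positivity)
    exact mul_le_mul_of_nonneg_left (descFactorial_bound hm hM2 hmM) (by positivity)
  have key : ∫ x in (0 : ℝ)..l, (f x - waveletProj l (K + 1) M f x) ^ 2 ≤
      B ^ 2 * ∫ x in (0 : ℝ)..l, (iteratedDeriv m f x) ^ 2 := by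
    refine le_trans ?_ (mul_le_mul_of_nonneg_right hconst hI0)
    rw [← s1, ← s2, Finset.mul_sum]
    exact Finset.sum_le_sum fun i hi => piece_error hl hmM K i (Finset.mem_range.1 hi) hf
  refine (Real.sqrt_le_sqrt key).trans_eq ?_
  rw [Real.sqrt_mul (sq_nonneg B), Real.sqrt_sq hB0]
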